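/- Let n be odd and let C_n(ℓ;a) be a circulant graph with symmetric edge lengths ℓ_1,…,ℓ_d > 0. Then for every k ∈ ℝ with sin(kℓ_h) ≠ 0 for all h, det M(k) = p_0(k) · ∏_{j=1}^{(n−1)/2} p_j(k)². -/

import Mathlib

open Finset

/-- The secular matrix `M(k)` of the quantum circulant graph `C_n(ℓ; a)` with
symmetric edge lengths. -/
noncomputable def Mmat (n d : ℕ) (a : Fin d → ℕ) (ℓ : Fin d → ℝ) (k : ℝ) :
    Matrix (ZMod n) (ZMod n) ℝ :=
  fun i j =>
    if i = j then -2 * ∑ h : Fin d, Real.cos (k * ℓ h) / Real.sin (k * ℓ h)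
    else ∑ h : Fin d,
      if i - j = (a h : ZMod n) ∨ i - j = -(a h : ZMod n)
        then 1 / Real.sin (k * ℓ h) else 0

/-! Over a finite abelian group `G`, the characters of `G` form a basis of `G → ℂ` made of common
eigenvectors of all circulant matrices, so the determinant of a circulant matrix is the product of
the Fourier coefficients of its symbol. The symbol of `M(k)` is a sum of point masses at `0` and at
the `±a_h`, with Fourier coefficients `p_j(k)`. It is even, hence `p_{-j} = p_j`, and for odd `n`
the nonzero residues pair off without fixed point. -/

lemma circulant_mulVec_addChar {G R : Type*} [AddGroup G] [Fintype G] [CommSemiring R]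
    (v : G → R) (ψ : AddChar G R) :
    (Matrix.circulant v).mulVec ψ = (∑ g, v g * ψ (-g)) • ⇑ψ := by
  ext i
  simp only [Matrix.mulVec, dotProduct, Matrix.circulant_apply, Pi.smul_apply, smul_eq_mul,
    sum_mul]
  refine Fintype.sum_equiv (Equiv.subLeft i) _ _ fun j => ?_
  rw [Equiv.subLeft_apply, mul_assoc, ← AddChar.map_add_eq_mul, neg_sub, sub_add_cancel]

lemma det_eq_prod_of_basis_apply_eq_smul {R M ι : Type*} [CommRing R] [AddCommGroup M] [Module R M]
    [Fintype ι] (b : Module.Basis ι R M) {f : M →ₗ[R] M} {μ : ι → R}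
    (h : ∀ i, f (b i) = μ i • b i) : LinearMap.det f = ∏ i, μ i := by
  classical
  have hdiag : LinearMap.toMatrix b b f = Matrix.diagonal μ := by
    ext i j
    rw [LinearMap.toMatrix_apply, h, map_smul, b.repr_self, Finsupp.smul_single_one,
      Finsupp.single_apply, Matrix.diagonal_apply]
    grind
  rw [← LinearMap.det_toMatrix b, hdiag, Matrix.det_diagonal]

theorem det_circulant_eq_prod_addChar {G : Type*} [AddCommGroup G] [Fintype G] [DecidableEq G]
    (v : G → ℂ) :
    (Matrix.circulant v).det = ∏ ψ : AddChar G ℂ, ∑ g, v g * ψ (-g) := by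
  rw [← LinearMap.det_toLin']
  refine det_eq_prod_of_basis_apply_eq_smul (AddChar.complexBasis G) fun ψ => ?_
  rw [AddChar.complexBasis_apply, Matrix.toLin'_apply, circulant_mulVec_addChar]

section ZMod

variable {n : ℕ} [NeZero n]

lemma zmodAddEquiv_apply_eq_stdAddChar (x y : ZMod n) :
    AddChar.zmodAddEquiv x y = ZMod.stdAddChar (x * y) :=
  rfl

theorem det_circulant_eq_prod_dft (v : ZMod n → ℂ) :
    (Matrix.circulant v).det = ∏ x, ZMod.dft v x := by
  rw [det_circulant_eq_prod_addChar]
  refine (Fintype.prod_equiv AddChar.zmodAddEquiv.toEquiv _ _ fun x => ?_).symm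
  rw [ZMod.dft_apply]
  refine sum_congr rfl fun g _ => ?_
  rw [smul_eq_mul, mul_comm, AddEquiv.toEquiv_eq_coe, EquivLike.coe_coe,
    zmodAddEquiv_apply_eq_stdAddChar, mul_neg, mul_comm g]

lemma prod_zmod_eq_prod_range {M : Type*} [CommMonoid M] (f : ZMod n → M) :
    ∏ x, f x = ∏ j ∈ range n, f j :=
  prod_nbij' ZMod.val (fun j : ℕ => (j : ZMod n)) (by simp [ZMod.val_lt]) (by simp) (by simp)
    (fun _ hj => ZMod.val_cast_of_lt (mem_range.mp hj)) (by simp)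

lemma prod_zmod_of_even_of_odd {M : Type*} [CommMonoid M] {f : ZMod n → M} (hf : f.Even)
    (hn : Odd n) : ∏ x, f x = f 0 * ∏ j ∈ Icc 1 ((n - 1) / 2), f j ^ 2 := by
  obtain ⟨m, rfl⟩ := hn
  have hreflect : ∏ j ∈ Ico (m + 1) (2 * m + 1), f j = ∏ j ∈ Ico 1 (m + 1), f j := by
    calc ∏ j ∈ Ico (m + 1) (2 * m + 1), f j
        = ∏ j ∈ Ico 1 (m + 1), f (2 * m + 1 - j : ℕ) := by
          rw [prod_Ico_reflect (fun j : ℕ => f j) 1 (by lia)]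
          congr 2
          lia
      _ = ∏ j ∈ Ico 1 (m + 1), f j := by
          refine prod_congr rfl fun j hj => ?_
          rw [Nat.cast_sub (by grind), ZMod.natCast_self, zero_sub, hf]
  rw [prod_zmod_eq_prod_range, prod_range_eq_mul_Ico _ (by lia), Nat.cast_zero,
    ← prod_Ico_consecutive _ (show 1 ≤ m + 1 by lia) (by lia), hreflect, Nat.add_sub_cancel,
    Nat.mul_div_cancel_left m two_pos, ← Finset.Ico_add_one_right_eq_Icc, prod_pow, sq]

theorem det_circulant_of_even_of_odd {v : ZMod n → ℂ} (hv : v.Even) (hn : Odd n) :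
    (Matrix.circulant v).det =
      ZMod.dft v 0 * ∏ j ∈ Icc 1 ((n - 1) / 2), ZMod.dft v j ^ 2 := by
  rw [det_circulant_eq_prod_dft, prod_zmod_of_even_of_odd (ZMod.dft_even_iff.mpr hv) hn]

lemma dft_single {E : Type*} [AddCommGroup E] [Module ℂ E] (a : ZMod n) (c : E) (x : ZMod n) :
    ZMod.dft (Pi.single a c : ZMod n → E) x = ZMod.stdAddChar (-(a * x)) • c := by
  rw [ZMod.dft_apply, sum_eq_single_of_mem a (mem_univ a), Pi.single_eq_same]
  intro b _ hb
  rw [Pi.single_eq_of_ne hb, smul_zero]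

lemma stdAddChar_neg_add_stdAddChar_natCast (m : ℕ) :
    ZMod.stdAddChar (-(m : ZMod n)) + ZMod.stdAddChar (m : ZMod n) =
      ((2 * Real.cos (2 * Real.pi * m / n) : ℝ) : ℂ) := by
  have hpos := ZMod.stdAddChar_coe (N := n) m
  have hneg := ZMod.stdAddChar_coe (N := n) (-m)
  push_cast at hpos hneg ⊢
  rw [hpos, hneg, Complex.two_cos, add_comm]
  congr 2 <;> ring

end ZMod

section JumpSymbol

variable {G ι R : Type*} [AddGroup G] [DecidableEq G] [Fintype ι] [AddCommMonoid R]

/-- The function with mass `c` at `0` and mass `w h` at each of the steps `s h` and `-s h`, the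
symbol of a circulant matrix with symmetric steps. Masses at coinciding points add up. -/
noncomputable def jumpSymbol (c : R) (w : ι → R) (s : ι → G) : G → R :=
  Pi.single 0 c + ∑ h, (Pi.single (s h) (w h) + Pi.single (-s h) (w h))

lemma jumpSymbol_apply (c : R) (w : ι → R) (s : ι → G) (g : G) :
    jumpSymbol c w s g = (if g = 0 then c else 0) +
      ∑ h, ((if g = s h then w h else 0) + if g = -s h then w h else 0) := by
  simp [jumpSymbol, Pi.single_apply]

lemma jumpSymbol_even (c : R) (w : ι → R) (s : ι → G) : (jumpSymbol c w s).Even := fun g => by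
  simp only [jumpSymbol_apply, neg_eq_zero, neg_inj, neg_eq_iff_eq_neg (b := s _),
    add_comm (ite (g = s _) _ _)]

lemma dft_jumpSymbol_natCast {n : ℕ} [NeZero n] (c : ℂ) (w : ι → ℂ) (a : ι → ℕ) (j : ℕ) :
    ZMod.dft (jumpSymbol c w fun h => (a h : ZMod n)) j =
      c + ∑ h, ((2 * Real.cos (2 * Real.pi * j * a h / n) : ℝ) : ℂ) * w h := by
  have hcos (h : ι) := stdAddChar_neg_add_stdAddChar_natCast (n := n) (j * a h)
  simp only [jumpSymbol, map_add, map_sum, Pi.add_apply, Finset.sum_apply, dft_single, smul_eq_mul]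
  simp only [zero_mul, neg_zero, AddChar.map_zero_eq_one, one_mul, neg_mul, neg_neg]
  congr 1
  refine sum_congr rfl fun h _ => ?_
  rw [mul_assoc (2 * Real.pi), ← Nat.cast_mul j, ← hcos, Nat.cast_mul, mul_comm (j : ZMod n),
    add_mul]

end JumpSymbol

section Secular

variable {n d : ℕ} {a : Fin d → ℕ} {ℓ : Fin d → ℝ} {k : ℝ}

/-- The factor `p_j(k)` of the secular determinant, in the form it takes for `j ≥ 1`. At `j = 0` it
is `2 ∑ (csc - cot)`, which `secularFactor_zero` brings into the tangent form of `p_0(k)`. -/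
noncomputable def secularFactor (n : ℕ) (a : Fin d → ℕ) (ℓ : Fin d → ℝ) (k : ℝ) (j : ℕ) : ℝ :=
  2 * ∑ h : Fin d,
    (-(Real.cos (k * ℓ h) / Real.sin (k * ℓ h)) +
      Real.cos (2 * Real.pi * j * a h / n) * (1 / Real.sin (k * ℓ h)))

lemma tan_half_eq_neg_cot_add_csc {x : ℝ} (hx : Real.sin x ≠ 0) :
    Real.tan (x / 2) = -(Real.cos x / Real.sin x) + 1 / Real.sin x := by
  obtain ⟨y, rfl⟩ : ∃ y, x = 2 * y := ⟨x / 2, by ring⟩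
  rw [Real.sin_two_mul] at hx
  have hsin : Real.sin y ≠ 0 := by grind
  have hcos : Real.cos y ≠ 0 := by grind
  rw [mul_div_cancel_left₀ y two_ne_zero, Real.tan_eq_sin_div_cos, Real.sin_two_mul,
    Real.cos_two_mul]
  field_simp
  linear_combination 2 * Real.sin_sq_add_cos_sq y

lemma secularFactor_zero (hk : ∀ h, Real.sin (k * ℓ h) ≠ 0) :
    secularFactor n a ℓ k 0 = 2 * ∑ h, Real.tan (k * ℓ h / 2) := by
  simp [secularFactor, tan_half_eq_neg_cot_add_csc (hk _)]

/-- The symbol of the secular matrix `M(k)`, complex-valued so that the discrete Fourier transform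
applies. It is not the column of index `0` of `M(k)` if some `a h` is its own negative mod `n`. -/
noncomputable def secularSymbol (n : ℕ) (a : Fin d → ℕ) (ℓ : Fin d → ℝ) (k : ℝ) : ZMod n → ℂ :=
  jumpSymbol ((-2 * ∑ h, Real.cos (k * ℓ h) / Real.sin (k * ℓ h) : ℝ) : ℂ)
    (fun h => ((1 / Real.sin (k * ℓ h) : ℝ) : ℂ)) fun h => (a h : ZMod n)

lemma secularSymbol_even : (secularSymbol n a ℓ k).Even :=
  jumpSymbol_even _ _ _

lemma Mmat_map_ofReal_eq_circulant (hn : Odd n) (ha : ∀ h, ¬n ∣ a h) :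
    (Mmat n d a ℓ k).map Complex.ofRealHom = Matrix.circulant (secularSymbol n a ℓ k) := by
  have ha₀ (h : Fin d) : (a h : ZMod n) ≠ 0 := mt (ZMod.natCast_eq_zero_iff _ _).mp (ha h)
  have ha_neg (h : Fin d) : (a h : ZMod n) ≠ -a h := ZMod.ne_neg_self hn (ha₀ h)
  ext i j
  rw [Matrix.map_apply, Matrix.circulant_apply, secularSymbol, jumpSymbol_apply, Mmat]
  by_cases hij : i = j
  · have hneg (h : Fin d) : (0 : ZMod n) ≠ -a h := (neg_ne_zero.mpr (ha₀ h)).symm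
    simp [hij, hneg, (ha₀ _).symm]
  · rw [if_neg hij, if_neg (sub_ne_zero.mpr hij), zero_add, map_sum]
    refine sum_congr rfl fun h _ => ?_
    have hexcl : ¬(i - j = a h ∧ i - j = -a h) := fun ⟨hp, hm⟩ => ha_neg h (hp.symm.trans hm)
    rw [apply_ite Complex.ofRealHom, map_zero, Complex.ofRealHom_eq_coe]
    grind

lemma dft_secularSymbol_natCast [NeZero n] (j : ℕ) :
    ZMod.dft (secularSymbol n a ℓ k) j = secularFactor n a ℓ k j := by
  rw [secularSymbol, dft_jumpSymbol_natCast, secularFactor]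
  push_cast
  rw [mul_sum, mul_sum, ← sum_add_distrib]
  exact sum_congr rfl fun h _ => by ring

theorem Mmat_det_odd_general [NeZero n] (hn : Odd n) (ha : ∀ h, ¬n ∣ a h)
    (hk : ∀ h, Real.sin (k * ℓ h) ≠ 0) :
    (Mmat n d a ℓ k).det =
      (2 * ∑ h, Real.tan (k * ℓ h / 2)) *
        ∏ j ∈ Icc 1 ((n - 1) / 2), secularFactor n a ℓ k j ^ 2 := by
  rw [← secularFactor_zero (n := n) (a := a) hk]
  apply Complex.ofReal_injective
  calc ((Mmat n d a ℓ k).det : ℂ)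
      = (Matrix.circulant (secularSymbol n a ℓ k)).det := by
        rw [← Complex.ofRealHom_eq_coe, RingHom.map_det, RingHom.mapMatrix_apply,
          Mmat_map_ofReal_eq_circulant hn ha]
    _ = ZMod.dft (secularSymbol n a ℓ k) (0 : ℕ) *
          ∏ j ∈ Icc 1 ((n - 1) / 2), ZMod.dft (secularSymbol n a ℓ k) j ^ 2 := by
        rw [det_circulant_of_even_of_odd secularSymbol_even hn, Nat.cast_zero]
    _ = _ := by
        simp only [dft_secularSymbol_natCast, Complex.ofReal_mul, Complex.ofReal_prod,
          Complex.ofReal_pow]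

end Secular

/-- For odd `n`, the secular determinant of the edge-symmetric quantum
circulant graph factorizes as `det M(k) = p_0(k) ∏_{j=1}^{(n-1)/2} p_j(k)²`. -/
theorem Mmat_det_odd (n d : ℕ) [NeZero n] (hn : Odd n) (a : Fin d → ℕ)
    (hd : 1 ≤ d) (hpos : ∀ h, 0 < a h) (hmono : StrictMono a)
    (hlt : ∀ h, 2 * a h < n)
    (ℓ : Fin d → ℝ) (hℓ : ∀ h, 0 < ℓ h) (k : ℝ)
    (hk : ∀ h, Real.sin (k * ℓ h) ≠ 0) :
    (Mmat n d a ℓ k).det =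
      (2 * ∑ h : Fin d, Real.tan (k * ℓ h / 2)) *
        ∏ j ∈ Finset.Icc 1 ((n - 1) / 2),
          (2 * ∑ h : Fin d,
            (-(Real.cos (k * ℓ h) / Real.sin (k * ℓ h)) +
              Real.cos (2 * Real.pi * j * a h / n) * (1 / Real.sin (k * ℓ h)))) ^ 2 := by
  have ha (h : Fin d) : ¬n ∣ a h := Nat.not_dvd_of_pos_of_lt (hpos h) (by linarith [hlt h])
  exact Mmat_det_odd_general hn ha hk
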